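/- Fix an integer k ≥ 1 and C = (c_0,…,c_k) with each c_p ∈ {0,1} and c_0 = 0. Let n ≥ 2, let M_1 ≥ 1 be an integer, and set M = ⌈e·k·c_1·(log(n−1) + 1) + e·(π²/6)·Σ_{p=2}^{k} c_p·binom(k,p)⌉ + M_1. Then Σ_{m > M + c_k − 1} O_C(n, m) ≤ e^{−M_1} · (n!)^k. -/

import Mathlib

open Finset

/-- `i` is a left-to-right minimum of the permutation `σ`. -/
def IsLTRMin {n : ℕ} (σ : Equiv.Perm (Fin n)) (i : Fin n) : Prop :=
  ∀ i' : Fin n, i' < i → σ i < σ i'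

instance {n : ℕ} (σ : Equiv.Perm (Fin n)) : DecidablePred (IsLTRMin σ) := fun i =>
  inferInstanceAs (Decidable (∀ i' : Fin n, i' < i → σ i < σ i'))

/-- `l(i)`: the number of `w` such that `i` is a left-to-right minimum of `σs w`. -/
def ltrCount {n k : ℕ} (σs : Fin k → Equiv.Perm (Fin n)) (i : Fin n) : ℕ :=
  (univ.filter fun w => IsLTRMin (σs w) i).card

/-- `O_C(n, m)`: the number of `k`-tuples of permutations of `{1,…,n}` such that exactly `m`
indices `i` satisfy `c (l i) = 1`. -/
def Oseq (k : ℕ) (c : ℕ → ℕ) (n m : ℕ) : ℕ :=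
  ((univ : Finset (Fin k → Equiv.Perm (Fin n))).filter fun σs =>
    (univ.filter fun i : Fin n => c (ltrCount σs i) = 1).card = m).card

/-- `F_j(C) = ∑_{p=0}^k c_p · binom(k,p) / (j-1)^p`. -/
noncomputable def Fc (k : ℕ) (c : ℕ → ℕ) (j : ℕ) : ℝ :=
  ∑ p ∈ Finset.range (k + 1), (c p : ℝ) * (k.choose p : ℝ) / ((j - 1 : ℕ) : ℝ) ^ p



def insPerm {n : ℕ} (x : Fin (n+1) × Equiv.Perm (Fin n)) : Equiv.Perm (Fin (n+1)) :=
  (finSuccEquiv' (Fin.last n)).trans ((Equiv.optionCongr x.2).trans (finSuccEquiv' x.1).symm)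

lemma insPerm_last {n : ℕ} (x : Fin (n+1) × Equiv.Perm (Fin n)) :
    insPerm x (Fin.last n) = x.1 := by
  simp [insPerm]

lemma insPerm_castSucc {n : ℕ} (x : Fin (n+1) × Equiv.Perm (Fin n)) (i : Fin n) :
    insPerm x i.castSucc = x.1.succAbove (x.2 i) := by
  have : finSuccEquiv' (Fin.last n) i.castSucc = some i := by
    rw [← Fin.succAbove_last]; exact finSuccEquiv'_succAbove _ _
  simp [insPerm, this]

lemma insPerm_bij (n : ℕ) : Function.Bijective (@insPerm n) := by
  rw [Fintype.bijective_iff_injective_and_card]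
  constructor
  · intro x y h
    have h1 : x.1 = y.1 := by rw [← insPerm_last x, h, insPerm_last]
    refine Prod.ext h1 (Equiv.ext fun i => ?_)
    have h2 := insPerm_castSucc x i
    rw [h, insPerm_castSucc, h1] at h2
    exact (Fin.succAbove_right_injective h2).symm
  · simp [Fintype.card_perm, Nat.factorial_succ]

lemma ltr_castSucc {n : ℕ} (x : Fin (n+1) × Equiv.Perm (Fin n)) (i : Fin n) :
    IsLTRMin (insPerm x) i.castSucc ↔ IsLTRMin x.2 i := by
  constructor
  · intro h j hj
    have := h j.castSucc (by simpa using hj)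
    rw [insPerm_castSucc, insPerm_castSucc] at this
    exact (Fin.strictMono_succAbove x.1).lt_iff_lt.1 this
  · intro h j hj
    induction j using Fin.lastCases with
    | last => exact absurd hj (not_lt.2 (Fin.le_last _))
    | cast j =>
      rw [insPerm_castSucc, insPerm_castSucc]
      exact Fin.strictMono_succAbove x.1 (h j (by simpa using hj))

lemma ltr_last {n : ℕ} (x : Fin (n+1) × Equiv.Perm (Fin n)) :
    IsLTRMin (insPerm x) (Fin.last n) ↔ x.1 = 0 := by
  constructor
  · intro h
    by_contra hx
    obtain ⟨j, hj⟩ := Fin.exists_succAbove_eq (x := 0) (y := x.1) (fun h => hx h.symm)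
    have := h (x.2.symm j).castSucc (Fin.castSucc_lt_last _)
    rw [insPerm_castSucc, insPerm_last] at this
    simp [hj] at this
  · intro h j hj
    induction j using Fin.lastCases with
    | last => exact absurd hj (lt_irrefl _)
    | cast j =>
      rw [insPerm_castSucc, insPerm_last, h]
      simp 

def zc {k n : ℕ} (a : Fin k → Fin (n+1)) : ℕ := (univ.filter fun w => a w = 0).card

lemma gen_sum (k : ℕ) (g : ℕ → ℕ → ℝ) (n : ℕ) :
    ∑ σs : Fin k → Equiv.Perm (Fin n), ∏ i : Fin n, g i (ltrCount σs i) =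
      ∏ i ∈ range n, ∑ a : Fin k → Fin (i+1), g i (zc a) := by
  induction n with
  | zero => simp
  | succ n ih =>
    rw [prod_range_succ, ← ih]
    let e : (Fin k → Fin (n+1)) × (Fin k → Equiv.Perm (Fin n)) ≃ (Fin k → Equiv.Perm (Fin (n+1))) :=
      (Equiv.arrowProdEquivProdArrow (Fin k) (fun _ => Fin (n+1)) (fun _ => Equiv.Perm (Fin n))).symm.trans
        (Equiv.arrowCongr (Equiv.refl _) (Equiv.ofBijective _ (insPerm_bij n)))
    rw [← e.sum_comp, Fintype.sum_prod_type, sum_comm, sum_mul_sum]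
    refine sum_congr rfl fun τ _ => sum_congr rfl fun a _ => ?_
    have he : ∀ w, e (a, τ) w = insPerm (a w, τ w) := fun w => rfl
    rw [Fin.prod_univ_castSucc]
    congr 1
    · refine prod_congr rfl fun i _ => ?_
      simp only [ltrCount, he, ltr_castSucc, Fin.val_castSucc]
    · simp only [ltrCount, he, ltr_last, zc, Fin.val_last]

lemma zc_card (k n p : ℕ) (hp : p ≤ k) :
    ((univ.filter fun a : Fin k → Fin (n+1) => zc a = p).card) ≤ k.choose p * (n+1)^(k-p) := by
  calc _ ≤ ((powersetCard p (univ : Finset (Fin k))).biUnion fun S =>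
        Fintype.piFinset fun w => if w ∈ S then ({0} : Finset (Fin (n+1))) else univ).card := by
        apply card_le_card
        intro a ha
        simp only [mem_filter, mem_univ, true_and] at ha
        simp only [mem_biUnion, mem_powersetCard, Fintype.mem_piFinset]
        refine ⟨univ.filter fun w => a w = 0, ⟨subset_univ _, ha⟩, fun w => ?_⟩
        by_cases h : a w = 0 <;> simp [h]
    _ ≤ (powersetCard p (univ : Finset (Fin k))).card * (n+1)^(k-p) := by
        apply card_biUnion_le_card_mul
        intro S hS
        rw [mem_powersetCard] at hS
        rw [Fintype.card_piFinset]
        have : ∀ w, (if w ∈ S then ({0} : Finset (Fin (n+1))) else univ).card = if w ∈ S then 1 else n+1 := by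
          intro w; split_ifs <;> simp
        simp only [this]
        rw [prod_ite]
        simp only [prod_const_one, one_mul, prod_const]
        apply le_of_eq
        congr 1
        rw [filter_not, card_sdiff_of_subset (filter_subset _ _)]
        simp [hS.2]
    _ = _ := by simp

noncomputable def gg (c : ℕ → ℕ) (i p : ℕ) : ℝ := if i = 0 then 1 else if c p = 1 then Real.exp 1 else 1

noncomputable def BB (k : ℕ) (c : ℕ → ℕ) (i : ℕ) : ℝ :=
  if i = 0 then 0 else ∑ p ∈ Icc 1 k, (c p : ℝ) * (k.choose p : ℝ) / (i:ℝ)^p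

lemma factor_bound (k : ℕ) (c : ℕ → ℕ) (hc0 : c 0 = 0) (i : ℕ) :
    ∑ a : Fin k → Fin (i+1), gg c i (zc a) ≤ ((i+1 : ℕ):ℝ)^k * Real.exp (Real.exp 1 * BB k c i) := by
  rcases Nat.eq_zero_or_pos i with rfl | hi
  · simp [gg, BB]
  have hi0 : i ≠ 0 := hi.ne'
  have hiR : (0:ℝ) < i := by exact_mod_cast hi
  have key : ∀ a : Fin k → Fin (i+1), gg c i (zc a) ≤
      1 + Real.exp 1 * ∑ p ∈ Icc 1 k, (c p : ℝ) * (if zc a = p then 1 else 0) := by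
    intro a
    have hnn : ∀ p ∈ Icc 1 k, 0 ≤ (c p : ℝ) * (if zc a = p then (1:ℝ) else 0) := by
      intro p _; split_ifs <;> simp
    have he := Real.exp_pos 1
    simp only [gg, hi0, if_false]
    split_ifs with h
    · have hz : zc a ∈ Icc 1 k := by
        rw [mem_Icc]
        constructor
        · by_contra h0
          have : zc a = 0 := by omega
          rw [this, hc0] at h; omega
        · exact (card_le_univ _).trans (by simp)
      have := single_le_sum hnn hz
      rw [if_pos rfl, h, Nat.cast_one, mul_one] at this
      nlinarith
    · have := sum_nonneg hnn
      nlinarith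
  calc _ ≤ ∑ a : Fin k → Fin (i+1), (1 + Real.exp 1 * ∑ p ∈ Icc 1 k, (c p : ℝ) * (if zc a = p then 1 else 0)) :=
        sum_le_sum fun a _ => key a
    _ = ((i+1:ℕ):ℝ)^k + Real.exp 1 * ∑ p ∈ Icc 1 k, (c p : ℝ) * ((univ.filter fun a : Fin k → Fin (i+1) => zc a = p).card : ℝ) := by
        rw [sum_add_distrib, ← mul_sum, sum_comm]
        simp only [← mul_sum, sum_boole]
        simp
    _ ≤ ((i+1:ℕ):ℝ)^k + Real.exp 1 * ∑ p ∈ Icc 1 k, ((i+1:ℕ):ℝ)^k * ((c p : ℝ) * (k.choose p : ℝ) / (i:ℝ)^p) := by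
        refine add_le_add le_rfl (mul_le_mul_of_nonneg_left (sum_le_sum fun p hp => ?_) (Real.exp_pos 1).le)
        rw [mem_Icc] at hp
        have h1 : ((univ.filter fun a : Fin k → Fin (i+1) => zc a = p).card : ℝ) ≤ k.choose p * ((i+1:ℕ):ℝ)^(k-p) := by
          exact_mod_cast zc_card k i p hp.2
        have h2 : ((i+1:ℕ):ℝ)^k = ((i+1:ℕ):ℝ)^(k-p) * ((i+1:ℕ):ℝ)^p := by
          rw [← pow_add]; congr 1; omega
        have h3 : (i:ℝ)^p ≤ ((i+1:ℕ):ℝ)^p := by gcongr; simp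
        calc _ ≤ (c p:ℝ) * (k.choose p * ((i+1:ℕ):ℝ)^(k-p)) := by gcongr
          _ ≤ _ := by
            rw [h2, ← mul_div_assoc, le_div_iff₀ (by positivity)]
            calc _ ≤ (c p:ℝ) * (k.choose p * ((i+1:ℕ):ℝ)^(k-p)) * ((i+1:ℕ):ℝ)^p := by gcongr
              _ = _ := by ring
    _ = ((i+1:ℕ):ℝ)^k * (Real.exp 1 * BB k c i + 1) := by
        rw [← mul_sum, BB, if_neg hi0]; ring
    _ ≤ _ := by
        gcongr
        exact Real.add_one_le_exp _

lemma BB_sum (k : ℕ) (hk : 1 ≤ k) (c : ℕ → ℕ) (n : ℕ) :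
    ∑ i ∈ range (n+1), BB k c i ≤ k * c 1 * (Real.log n + 1) +
      (Real.pi^2/6) * ∑ p ∈ Icc 2 k, (c p : ℝ) * (k.choose p : ℝ) := by
  rw [sum_range_succ']
  have h0 : BB k c 0 = 0 := by simp [BB]
  rw [h0, add_zero]
  have hb : ∀ i, BB k c (i+1) ≤ k * c 1 * ((i:ℝ)+1)⁻¹ +
      (∑ p ∈ Icc 2 k, (c p : ℝ) * (k.choose p : ℝ)) * (1/((i+1:ℕ):ℝ)^2) := by
    intro i
    rw [BB, if_neg (by omega), ← Finset.add_sum_Ioc_eq_sum_Icc hk, sum_mul]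
    have : Ioc 1 k = Icc 2 k := by ext; simp; omega
    rw [this]
    apply add_le_add
    · apply le_of_eq
      simp; ring
    · apply sum_le_sum
      intro p hp
      rw [mem_Icc] at hp
      rw [div_eq_mul_one_div]
      gcongr
      · simp
      · exact hp.1
  refine (sum_le_sum fun i _ => hb i).trans ?_
  rw [sum_add_distrib, ← mul_sum, ← mul_sum, mul_comm (Real.pi^2/6)]
  gcongr
  · have := harmonic_le_one_add_log n
    simp only [harmonic] at this
    push_cast at this
    linarith
  · have h := hasSum_zeta_two
    have h2 := sum_le_hasSum (range (n+1)) (fun i _ => by positivity) h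
    rw [sum_range_succ'] at h2
    simpa using h2

/-- Theorem 2.4 (concentration): for `c_0 = 0`,
`∑_{m > M + c_k - 1} O_C(n, m) ≤ e^{-M_1} (n!)^k`. -/
theorem stmt_12 (k : ℕ) (hk : 1 ≤ k) (c : ℕ → ℕ) (hc : ∀ p ≤ k, c p = 0 ∨ c p = 1)
    (hc0 : c 0 = 0) (n : ℕ) (hn : 2 ≤ n) (M1 : ℤ) (hM1 : 1 ≤ M1) (M : ℤ)
    (hM : M = ⌈Real.exp 1 * k * c 1 * (Real.log ((n : ℝ) - 1) + 1) +
          Real.exp 1 * (Real.pi ^ 2 / 6) *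
            ∑ p ∈ Finset.Icc 2 k, (c p : ℝ) * (k.choose p : ℝ)⌉ + M1) :
    ∑ m ∈ (Finset.range (n + 1)).filter (fun m : ℕ => M + (c k : ℤ) - 1 < (m : ℤ)),
        (Oseq k c n m : ℝ) ≤
      Real.exp (-(M1 : ℝ)) * ((n.factorial : ℝ)) ^ k := by
  obtain ⟨N, rfl⟩ : ∃ N, n = N + 1 := ⟨n - 1, by omega⟩
  have hsum : ∑ m ∈ (Finset.range (N + 1 + 1)).filter (fun m : ℕ => M + (c k : ℤ) - 1 < (m : ℤ)),
      (Oseq k c (N+1) m : ℝ) ≤ Real.exp (-(M:ℝ)) *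
        ∑ σs : Fin k → Equiv.Perm (Fin (N+1)), ∏ i : Fin (N+1), gg c i (ltrCount σs i) := by
    rw [← Nat.cast_sum]
    unfold Oseq
    rw [Finset.sum_card_fiberwise_eq_card_filter, Finset.card_filter, mul_sum]
    push_cast
    apply sum_le_sum
    intro σs _
    have hprod : ∏ i : Fin (N+1), gg c i (ltrCount σs i) =
        Real.exp 1 ^ (univ.filter fun i : Fin N => c (ltrCount σs i.succ) = 1).card := by
      rw [Fin.prod_univ_succ]
      simp [gg, prod_ite]
    rw [hprod, ← Real.exp_nat_mul, ← Real.exp_add]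
    split_ifs with h
    · rw [mem_filter] at h
      have h2 := h.2
      rw [Fin.card_filter_univ_succ] at h2
      apply Real.one_le_exp
      have hl : ltrCount σs 0 = k := by
        simp [ltrCount, IsLTRMin]
      rw [hl] at h2
      have h3 : M ≤ ((univ.filter fun i : Fin N => c (ltrCount σs i.succ) = 1).card : ℤ) := by
        rcases hc k le_rfl with h' | h' <;> simp [h'] at h2 ⊢ <;> omega
      have h4 : (M:ℝ) ≤ ((univ.filter fun i : Fin N => c (ltrCount σs i.succ) = 1).card : ℝ) := by
        exact_mod_cast h3
      linarith
    · positivity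
  refine hsum.trans ?_
  rw [gen_sum]
  have hp : ∏ i ∈ range (N+1), ∑ a : Fin k → Fin (i+1), gg c i (zc a) ≤
      ((N+1).factorial : ℝ)^k * Real.exp (Real.exp 1 * ∑ i ∈ range (N+1), BB k c i) := by
    refine (prod_le_prod ?_ (fun i _ => factor_bound k c hc0 i)).trans (le_of_eq ?_)
    · intro i _
      apply sum_nonneg
      intro a _
      unfold gg
      split_ifs <;> positivity
    · rw [prod_mul_distrib, ← Real.exp_sum, mul_sum, prod_pow, ← Finset.prod_range_add_one_eq_factorial]
      push_cast
      rfl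
  refine (mul_le_mul_of_nonneg_left hp (Real.exp_pos _).le).trans ?_
  rw [mul_comm (_ ^ k) _, ← mul_assoc, ← Real.exp_add]
  gcongr
  have hB := BB_sum k hk c N
  have hce := Int.le_ceil (Real.exp 1 * k * c 1 * (Real.log (((N+1:ℕ) : ℝ) - 1) + 1) +
          Real.exp 1 * (Real.pi ^ 2 / 6) *
            ∑ p ∈ Finset.Icc 2 k, (c p : ℝ) * (k.choose p : ℝ))
  have hMR := congrArg (fun z : ℤ => (z:ℝ)) hM
  simp only [Int.cast_add] at hMR
  have hN : (((N+1:ℕ) : ℝ) - 1) = N := by push_cast; ring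
  rw [hN] at hce hMR
  have := mul_le_mul_of_nonneg_left hB (Real.exp_pos 1).le
  rw [hMR]
  linarith
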